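/- Let X and Y be locally compact Hausdorff spaces. If T : C₀(X,ℝ)⁺ → C₀(Y,ℝ)⁺ is a surjective isometry, then there exists a unique surjective linear isometry T̃ : C₀(X,ℝ) → C₀(Y,ℝ) such that T̃(f) = T(f) for all f ∈ C₀(X,ℝ)⁺. -/

import Mathlib

/-!
The map `T` preserves the pointwise order, because for nonnegative functions `f ≤ g` has a purely
metric description: every nonnegative `u` of large norm is at least as far from `f` as from `g`
(`le_iff_metric`). The zero function is also singled out metrically (`map_zero_cone`), so `T`
preserves norms, and hence this description.

Consequently `T` maps each order interval `[f, g]` isometrically onto `[T f, T g]`. An order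
interval is bounded and has the isometric point reflection `h ↦ f + g - h`, so Väisälä's argument
for the Mazur–Ulam theorem applies to it and shows that `T` maps the midpoint of `[f, g]` to the
midpoint of `[T f, T g]` (`map_midpoint_of_le`).

Applied to `f ≤ f + 2g`, this shows that the additivity defect `E(f, g) = T (f + g) - T f - T g`
satisfies `E(f, 2g) = 2 E(f, g)`. Since `‖E(f, g)‖ ≤ 2‖f‖` for all `g`, the defect vanishes, and `T`
is additive (`map_add_cone`). The extension is then `f ↦ T f⁺ - T f⁻`.
-/

open scoped ZeroAtInfty

/-- The positive cone of `C₀(X, ℝ)`: all nonnegative functions. -/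
def PosCone (X : Type*) [TopologicalSpace X] : Type _ :=
  {f : C₀(X, ℝ) // ∀ x, 0 ≤ f x}

namespace PosCone

variable {X : Type*} [TopologicalSpace X]

/-- The underlying `C₀` function of an element of the positive cone. -/
noncomputable instance : CoeOut (PosCone X) C₀(X, ℝ) := ⟨Subtype.val⟩

/-- The zero function, as an element of the positive cone. -/
noncomputable instance : Zero (PosCone X) := ⟨⟨0, fun x => by simp⟩⟩

end PosCone

/-- The peak set `P_x`: all nonzero nonnegative functions attaining their norm at `x`. -/
def Peak {X : Type*} [TopologicalSpace X] (x : X) : Set (PosCone X) :=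
  {f | (f : C₀(X, ℝ)) ≠ 0 ∧ (f : C₀(X, ℝ)) x = ‖(f : C₀(X, ℝ))‖}

/-- `M(f)`: the set of points where `f` attains its norm. -/
def MaxSet {X : Type*} [TopologicalSpace X] (f : C₀(X, ℝ)) : Set X :=
  {x | f x = ‖f‖}

/-- The sum of finitely many elements of the positive cone. -/
noncomputable def sumCone {Y : Type*} [TopologicalSpace Y] {n : ℕ}
    (u : Fin n → PosCone Y) : PosCone Y :=
  ⟨∑ k, (u k : C₀(Y, ℝ)), fun y => by
    have h : (∑ k, (u k : C₀(Y, ℝ))) y = ∑ k, (u k : C₀(Y, ℝ)) y := by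
      refine map_sum ((Pi.evalAddMonoidHom (fun _ : Y => ℝ) y).comp
        ⟨⟨fun f : C₀(Y, ℝ) => ⇑f, ZeroAtInftyContinuousMap.coe_zero⟩,
          ZeroAtInftyContinuousMap.coe_add⟩) _ _
    rw [h]
    exact Finset.sum_nonneg fun k _ => (u k).2 y⟩

namespace PosCone

/-! ### The positive cone and its order -/

section Basic

variable {X : Type*} [TopologicalSpace X]

theorem abs_apply_le_norm (f : C₀(X, ℝ)) (x : X) : |f x| ≤ ‖f‖ :=
  f.toBCF.norm_coe_le_norm x

theorem norm_le_of_abs_le {f : C₀(X, ℝ)} {C : ℝ} (hC : 0 ≤ C) (h : ∀ x, |f x| ≤ C) : ‖f‖ ≤ C :=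
  (BoundedContinuousFunction.norm_le (f := f.toBCF) hC).2 h

/-- The positive part `f⁺ = max f 0` of a function in `C₀(X, ℝ)`. -/
noncomputable def posPart (f : C₀(X, ℝ)) : PosCone X :=
  ⟨⟨⟨fun x => max (f x) 0, by fun_prop⟩, by
    simpa using f.zero_at_infty'.max (tendsto_const_nhds (x := (0 : ℝ)))⟩,
    fun x => le_max_right (f x) 0⟩

theorem posPart_apply (f : C₀(X, ℝ)) (x : X) : (posPart f).1 x = max (f x) 0 := rfl

theorem posPart_sub_posPart_neg (f : C₀(X, ℝ)) : (posPart f).1 - (posPart (-f)).1 = f := by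
  ext x
  simp only [ZeroAtInftyContinuousMap.sub_apply, posPart_apply, ZeroAtInftyContinuousMap.neg_apply]
  rcases le_total (f x) 0 with h | h
  · rw [max_eq_right h, max_eq_left (by linarith)]; ring
  · rw [max_eq_left h, max_eq_right (by linarith)]; ring

/-- The sum of two elements of the positive cone. -/
noncomputable def add (f g : PosCone X) : PosCone X :=
  ⟨f.1 + g.1, fun x => add_nonneg (f.2 x) (g.2 x)⟩

/-- The metric description of the pointwise order on the positive cone. For `u` of large norm the
distance `‖u - f‖` is the supremum of `u - f`, as the negative part of `u - f` is bounded by `‖f‖`;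
so it decreases when `f` increases. -/
theorem le_iff_metric (f g : PosCone X) :
    (∀ x, f.1 x ≤ g.1 x) ↔
      ∀ u : PosCone X, 2 * (‖f.1‖ + ‖g.1‖) ≤ ‖u.1‖ → ‖u.1 - g.1‖ ≤ ‖u.1 - f.1‖ := by
  constructor
  · intro h u hu
    refine norm_le_of_abs_le (norm_nonneg _) fun x => ?_
    have h1 := abs_apply_le_norm (u.1 - f.1) x
    have h2 := abs_apply_le_norm g.1 x
    have h3 := norm_sub_norm_le u.1 f.1
    have h4 := h x
    have h5 := u.2 x
    have h6 := norm_nonneg f.1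
    have h7 := norm_nonneg g.1
    rw [ZeroAtInftyContinuousMap.sub_apply] at h1 ⊢
    rw [abs_le] at *
    constructor <;> linarith
  · intro h
    -- The test function `u = f + c (f - g)⁺` is at distance `c‖(f - g)⁺‖` from `f`, but at distance
    -- at least `(c + 1)‖(f - g)⁺‖` from `g`.
    set p := posPart (f.1 - g.1) with hp
    have hp0 : ‖p.1‖ = 0 := by
      by_contra hne
      have hpos : 0 < ‖p.1‖ := lt_of_le_of_ne (norm_nonneg _) (Ne.symm hne)
      obtain ⟨c, hc, hcp⟩ : ∃ c : ℝ, 0 ≤ c ∧ c * ‖p.1‖ = 2 * (‖f.1‖ + ‖g.1‖) :=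
        ⟨2 * (‖f.1‖ + ‖g.1‖) / ‖p.1‖, by positivity, by field_simp⟩
      let u : PosCone X := ⟨f.1 + c • p.1, fun x => by
        have := f.2 x
        have := mul_nonneg hc (p.2 x)
        simp only [ZeroAtInftyContinuousMap.add_apply, ZeroAtInftyContinuousMap.smul_apply,
          smul_eq_mul]
        linarith⟩
      have hux (x : X) : u.1 x = f.1 x + c * p.1 x := rfl
      have hcn : ‖c • p.1‖ = c * ‖p.1‖ := by rw [norm_smul, Real.norm_of_nonneg hc]
      have hu : c * ‖p.1‖ ≤ ‖u.1‖ := by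
        rw [← hcn]
        refine norm_le_of_abs_le (norm_nonneg _) fun x => ?_
        have h1 := abs_apply_le_norm u.1 x
        have h2 := f.2 x
        have h3 := mul_nonneg hc (p.2 x)
        rw [ZeroAtInftyContinuousMap.smul_apply, smul_eq_mul, abs_of_nonneg h3]
        rw [abs_of_nonneg (u.2 x), hux] at h1
        linarith
      have hd := h u (by rw [← hcp]; exact hu)
      have huf : u.1 - f.1 = c • p.1 := by simp [u]
      rw [huf, hcn] at hd
      have hle : ‖(c + 1) • p.1‖ ≤ c * ‖p.1‖ := by
        refine norm_le_of_abs_le (by positivity) fun x => ?_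
        have hpx : 0 ≤ (c + 1) * p.1 x := mul_nonneg (by linarith) (p.2 x)
        rw [ZeroAtInftyContinuousMap.smul_apply, smul_eq_mul, abs_of_nonneg hpx]
        rcases le_total (f.1 x - g.1 x) 0 with hx | hx
        · have : p.1 x = 0 := max_eq_right hx
          rw [this, mul_zero]; positivity
        · have h1 : p.1 x = f.1 x - g.1 x := max_eq_left hx
          have h2 := (le_abs_self _).trans (abs_apply_le_norm (u.1 - g.1) x)
          rw [ZeroAtInftyContinuousMap.sub_apply, hux] at h2
          linarith
      rw [norm_smul, Real.norm_of_nonneg (by linarith : 0 ≤ c + 1)] at hle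
      linarith
    intro x
    have h1 := abs_apply_le_norm p.1 x
    rw [hp0, hp, posPart_apply, ZeroAtInftyContinuousMap.sub_apply] at h1
    have h2 := le_max_left (f.1 x - g.1 x) 0
    have h3 := le_abs_self (max (f.1 x - g.1 x) 0)
    linarith

end Basic

/-! ### Point reflections and order intervals -/

theorem le_zero_of_two_pow_mul_le {a C : ℝ} (h : ∀ n : ℕ, 2 ^ n * a ≤ C) : a ≤ 0 := by
  by_contra! ha
  obtain ⟨n, hn⟩ := pow_unbounded_of_one_lt (C / a) (one_lt_two : (1 : ℝ) < 2)
  rw [div_lt_iff₀ ha] at hn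
  exact absurd (h n) (not_le.2 hn)

/-- Väisälä's argument: in a bounded metric space with a point reflection `R` about `z`, every
surjective self-isometry `e` fixes `z`. Indeed `R ∘ e⁻¹ ∘ R ∘ e` displaces `z` twice as far as `e`
does, so a nonzero displacement could be doubled indefinitely. -/
theorem fixed_of_reflection {M : Type*} [MetricSpace M] (R : M ≃ᵢ M) (z : M) (hz : R z = z)
    (hR : ∀ x, dist (R x) x = 2 * dist x z) (C : ℝ) (hC : ∀ x, dist x z ≤ C) (e : M ≃ᵢ M) :
    e z = z := by
  have key : ∀ n : ℕ, ∀ e : M ≃ᵢ M, 2 ^ n * dist (e z) z ≤ C := by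
    intro n
    induction n with
    | zero => intro e; simpa using hC (e z)
    | succ n ih =>
      intro e
      have h : dist (R (e.symm (R (e z)))) z = 2 * dist (e z) z := by
        calc dist (R (e.symm (R (e z)))) z = dist (R (e.symm (R (e z)))) (R z) := by rw [hz]
          _ = dist (e.symm (R (e z))) (e.symm (e z)) := by
            rw [R.dist_eq, IsometryEquiv.symm_apply_apply]
          _ = 2 * dist (e z) z := by rw [e.symm.dist_eq, hR]
      have := ih (((e.trans R).trans e.symm).trans R)
      simp only [IsometryEquiv.trans_apply, h] at this
      rw [pow_succ, mul_assoc]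
      exact this
  exact dist_le_zero.1 (le_zero_of_two_pow_mul_le fun n => key n e)

section Interval

variable {X : Type*} [TopologicalSpace X]

/-- The order interval `[f, g]` in `C₀(X, ℝ)`, as a metric space. -/
abbrev Interval (f g : C₀(X, ℝ)) : Type _ :=
  {h : C₀(X, ℝ) // ∀ x, f x ≤ h x ∧ h x ≤ g x}

/-- The point reflection `h ↦ f + g - h` of the order interval `[f, g]`. -/
noncomputable def reflect (f g : C₀(X, ℝ)) : Interval f g ≃ᵢ Interval f g :=
  have hmem (h : Interval f g) (x : X) : f x ≤ (f + g - h.1) x ∧ (f + g - h.1) x ≤ g x := by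
    have := h.2 x
    simp only [ZeroAtInftyContinuousMap.sub_apply, ZeroAtInftyContinuousMap.add_apply]
    constructor <;> linarith
  IsometryEquiv.mk'
    (fun h => ⟨f + g - h.1, hmem h⟩)
    (fun h => ⟨f + g - h.1, hmem h⟩)
    (fun h => Subtype.ext (sub_sub_cancel _ _))
    (Isometry.of_dist_eq fun h k => by
      simp only [Subtype.dist_eq, dist_sub_left])

theorem reflect_coe (f g : C₀(X, ℝ)) (h : Interval f g) : (reflect f g h).1 = f + g - h.1 := rfl

end Interval

/-! ### Isometries between positive cones -/

section Isometry

variable {X Y : Type*} [TopologicalSpace X] [TopologicalSpace Y] {T : PosCone X → PosCone Y}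

/-- Zero is fixed. If `T f = 0`, then `0` and `2f` lie at distance `‖f‖` from `f` and `2‖f‖` from
each other; but nonnegative functions at distance at most `r` from `0` are within `r` of each other,
so `2‖f‖ ≤ ‖f‖`. -/
theorem map_zero_cone (hsurj : Function.Surjective T)
    (hiso : ∀ f g : PosCone X, ‖(T f).1 - (T g).1‖ = ‖f.1 - g.1‖) : T 0 = 0 := by
  obtain ⟨f, hf⟩ := hsurj 0
  have hT0 : (T f).1 = 0 := congrArg Subtype.val hf
  have h1 : ‖(T 0).1‖ = ‖f.1‖ := by
    have h := hiso 0 f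
    rwa [hT0, sub_zero, show (0 : PosCone X).1 = 0 from rfl, zero_sub, norm_neg] at h
  have h2 : ‖(T (f.add f)).1‖ = ‖f.1‖ := by
    have h := hiso (f.add f) f
    rwa [hT0, sub_zero, show (f.add f).1 = f.1 + f.1 from rfl, add_sub_cancel_right] at h
  have h3 : ‖(T (f.add f)).1 - (T 0).1‖ = 2 * ‖f.1‖ := by
    rw [hiso, show (f.add f).1 = f.1 + f.1 from rfl, show (0 : PosCone X).1 = 0 from rfl, sub_zero,
      ← two_smul ℝ f.1, norm_smul]
    norm_num
  have h4 : ‖(T (f.add f)).1 - (T 0).1‖ ≤ ‖f.1‖ := by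
    refine norm_le_of_abs_le (norm_nonneg _) fun y => ?_
    have h5 := abs_apply_le_norm (T (f.add f)).1 y
    have h6 := abs_apply_le_norm (T 0).1 y
    have h7 := (T (f.add f)).2 y
    have h8 := (T 0).2 y
    rw [ZeroAtInftyContinuousMap.sub_apply]
    rw [abs_le] at *
    constructor <;> linarith
  have h5 : f.1 = 0 := norm_le_zero_iff.1 (by linarith)
  have h6 : f = 0 := Subtype.ext h5
  rwa [h6] at hf

theorem norm_map_cone (hsurj : Function.Surjective T)
    (hiso : ∀ f g : PosCone X, ‖(T f).1 - (T g).1‖ = ‖f.1 - g.1‖) (f : PosCone X) :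
    ‖(T f).1‖ = ‖f.1‖ := by
  have h := hiso f 0
  rwa [map_zero_cone hsurj hiso, show (0 : PosCone X).1 = 0 from rfl,
    show (0 : PosCone Y).1 = 0 from rfl, sub_zero, sub_zero] at h

theorem map_le_iff (hsurj : Function.Surjective T)
    (hiso : ∀ f g : PosCone X, ‖(T f).1 - (T g).1‖ = ‖f.1 - g.1‖) (f g : PosCone X) :
    (∀ y, (T f).1 y ≤ (T g).1 y) ↔ ∀ x, f.1 x ≤ g.1 x := by
  rw [le_iff_metric, le_iff_metric, hsurj.forall]
  simp only [norm_map_cone hsurj hiso, hiso]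

/-- `T` restricts to an isometry between order intervals. -/
theorem exists_interval_isometry (hsurj : Function.Surjective T)
    (hiso : ∀ f g : PosCone X, ‖(T f).1 - (T g).1‖ = ‖f.1 - g.1‖) (f g : PosCone X) :
    ∃ φ : Interval f.1 g.1 ≃ᵢ Interval (T f).1 (T g).1,
      ∀ (m : PosCone X) (hm : ∀ x, f.1 x ≤ m.1 x ∧ m.1 x ≤ g.1 x), (φ ⟨m.1, hm⟩).1 = (T m).1 := by
  let c (h : Interval f.1 g.1) : PosCone X := ⟨h.1, fun x => (f.2 x).trans (h.2 x).1⟩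
  let φ₀ (h : Interval f.1 g.1) : Interval (T f).1 (T g).1 := ⟨(T (c h)).1, fun y =>
    ⟨(map_le_iff hsurj hiso f (c h)).2 (fun x => (h.2 x).1) y,
      (map_le_iff hsurj hiso (c h) g).2 (fun x => (h.2 x).2) y⟩⟩
  have hφ : Isometry φ₀ := Isometry.of_dist_eq fun h k => by
    simp only [Subtype.dist_eq, dist_eq_norm]
    exact hiso (c h) (c k)
  have hs : Function.Surjective φ₀ := by
    intro k
    obtain ⟨h, hh⟩ := hsurj ⟨k.1, fun y => ((T f).2 y).trans (k.2 y).1⟩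
    have hk : (T h).1 = k.1 := congrArg Subtype.val hh
    refine ⟨⟨h.1, fun x => ⟨?_, ?_⟩⟩, Subtype.ext hk⟩
    · exact (map_le_iff hsurj hiso f h).1 (fun y => by rw [hk]; exact (k.2 y).1) x
    · exact (map_le_iff hsurj hiso h g).1 (fun y => by rw [hk]; exact (k.2 y).2) x
  exact ⟨⟨Equiv.ofBijective φ₀ ⟨hφ.injective, hs⟩, hφ⟩, fun _ _ => rfl⟩

/-- `T` maps the midpoint `m` of an order interval `[f, g]` to the midpoint of `[T f, T g]`. -/
theorem map_midpoint_of_le (hsurj : Function.Surjective T)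
    (hiso : ∀ f g : PosCone X, ‖(T f).1 - (T g).1‖ = ‖f.1 - g.1‖) {f g m : PosCone X}
    (hfg : ∀ x, f.1 x ≤ g.1 x) (hm : m.1 + m.1 = f.1 + g.1) :
    (T m).1 + (T m).1 = (T f).1 + (T g).1 := by
  have hmI : ∀ x, f.1 x ≤ m.1 x ∧ m.1 x ≤ g.1 x := fun x => by
    have h := DFunLike.congr_fun hm x
    simp only [ZeroAtInftyContinuousMap.add_apply] at h
    have := hfg x
    constructor <;> linarith
  obtain ⟨φ, hφ⟩ := exists_interval_isometry hsurj hiso f g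
  let z : Interval f.1 g.1 := ⟨m.1, hmI⟩
  let R := reflect f.1 g.1
  let R' := reflect (T f).1 (T g).1
  have hz : R z = z := Subtype.ext (by
    rw [reflect_coe, ← hm]
    exact add_sub_cancel_right _ _)
  have hR (h : Interval f.1 g.1) : dist (R h) h = 2 * dist h z := by
    simp only [Subtype.dist_eq, dist_eq_norm, R, reflect_coe]
    rw [← hm, show m.1 + m.1 - h.1 - h.1 = (-2 : ℝ) • (h.1 - m.1) by module, norm_smul]
    norm_num [z]
  have hC (h : Interval f.1 g.1) : dist h z ≤ ‖g.1‖ := by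
    rw [Subtype.dist_eq, dist_eq_norm]
    refine norm_le_of_abs_le (norm_nonneg _) fun x => ?_
    have h1 := abs_apply_le_norm g.1 x
    have h2 := f.2 x
    have h3 := h.2 x
    have h4 := hmI x
    rw [ZeroAtInftyContinuousMap.sub_apply]
    rw [abs_le] at *
    constructor <;> linarith
  -- Transporting the reflection of the target back by `φ` gives an isometry that must fix `z`.
  have hfix := fixed_of_reflection R z hz hR _ hC ((φ.trans R').trans φ.symm)
  simp only [IsometryEquiv.trans_apply] at hfix
  have h1 : R' (φ z) = φ z := (φ.apply_symm_apply _).symm.trans (congrArg φ hfix)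
  have h2 : (T f).1 + (T g).1 - (φ z).1 = (φ z).1 := congrArg Subtype.val h1
  rw [hφ m hmI] at h2
  exact (sub_eq_iff_eq_add.1 h2).symm

/-- The additivity defect `T (f + g) - T f - T g` doubles when `g` is doubled, yet it is at most
`2‖f‖`; hence it is zero. -/
theorem map_add_cone (hsurj : Function.Surjective T)
    (hiso : ∀ f g : PosCone X, ‖(T f).1 - (T g).1‖ = ‖f.1 - g.1‖) (f g : PosCone X) :
    (T (f.add g)).1 = (T f).1 + (T g).1 := by
  have key : ∀ n : ℕ, ∀ g : PosCone X,
      2 ^ n * ‖(T (f.add g)).1 - (T f).1 - (T g).1‖ ≤ 2 * ‖f.1‖ := by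
    intro n
    induction n with
    | zero =>
      intro g
      have h1 : ‖(T (f.add g)).1 - (T g).1‖ = ‖f.1‖ := by
        rw [hiso, show (f.add g).1 = f.1 + g.1 from rfl, add_sub_cancel_right]
      have h2 := norm_sub_le ((T (f.add g)).1 - (T g).1) (T f).1
      rw [h1, norm_map_cone hsurj hiso] at h2
      rw [pow_zero, one_mul, sub_right_comm]
      linarith
    | succ n ih =>
      intro g
      have h1 : (T (f.add g)).1 + (T (f.add g)).1 = (T f).1 + (T (f.add (g.add g))).1 := by
        refine map_midpoint_of_le hsurj hiso (fun x => ?_) ?_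
        · exact le_add_of_nonneg_right ((g.add g).2 x)
        · change (f.1 + g.1) + (f.1 + g.1) = f.1 + (f.1 + (g.1 + g.1))
          abel
      have h2 : (T g).1 + (T g).1 = (T (g.add g)).1 := by
        have h := map_midpoint_of_le hsurj hiso (f := 0) (g := g.add g) (m := g)
          (fun x => (g.add g).2 x) (zero_add _).symm
        rwa [map_zero_cone hsurj hiso, show (0 : PosCone Y).1 = 0 from rfl, zero_add] at h
      have h3 : (T (f.add (g.add g))).1 - (T f).1 - (T (g.add g)).1
          = (2 : ℝ) • ((T (f.add g)).1 - (T f).1 - (T g).1) := by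
        rw [← h2, ← sub_eq_iff_eq_add'.2 h1]
        module
      have h4 := ih (g.add g)
      rw [h3, norm_smul, Real.norm_of_nonneg zero_le_two] at h4
      rw [pow_succ, mul_assoc]
      exact h4
  have h := norm_le_zero_iff.1 (le_zero_of_two_pow_mul_le fun n => key n g)
  rw [sub_sub] at h
  exact sub_eq_zero.1 h

/-- The value `T f⁺ - T f⁻` of the extension may be computed from any decomposition `f = u - v`. -/
theorem map_sub_eq (hsurj : Function.Surjective T)
    (hiso : ∀ f g : PosCone X, ‖(T f).1 - (T g).1‖ = ‖f.1 - g.1‖) {u v u' v' : PosCone X}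
    (h : u.1 - v.1 = u'.1 - v'.1) : (T u).1 - (T v).1 = (T u').1 - (T v').1 := by
  have h1 : u.add v' = u'.add v := Subtype.ext (sub_eq_sub_iff_add_eq_add.1 h)
  rw [sub_eq_sub_iff_add_eq_add, ← map_add_cone hsurj hiso, ← map_add_cone hsurj hiso, h1]

end Isometry

end PosCone

/-! ### The linear extension -/

theorem isometry_extends {X Y : Type*}
    [TopologicalSpace X] [LocallyCompactSpace X] [T2Space X]
    [TopologicalSpace Y] [LocallyCompactSpace Y] [T2Space Y]
    (T : PosCone X → PosCone Y)
    (hsurj : Function.Surjective T)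
    (hiso : ∀ f g : PosCone X,
      ‖(T f : C₀(Y, ℝ)) - (T g : C₀(Y, ℝ))‖ = ‖(f : C₀(X, ℝ)) - (g : C₀(X, ℝ))‖) :
    ∃! Ttilde : C₀(X, ℝ) →ₗᵢ[ℝ] C₀(Y, ℝ),
      Function.Surjective Ttilde ∧
        ∀ f : PosCone X, Ttilde (f : C₀(X, ℝ)) = (T f : C₀(Y, ℝ)) := by
  have hsub (f : C₀(X, ℝ)) := PosCone.posPart_sub_posPart_neg f
  let E (f : C₀(X, ℝ)) : C₀(Y, ℝ) := (T (PosCone.posPart f)).1 - (T (PosCone.posPart (-f))).1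
  have hE {f : C₀(X, ℝ)} (u v : PosCone X) (h : f = u.1 - v.1) : E f = (T u).1 - (T v).1 :=
    PosCone.map_sub_eq hsurj hiso ((hsub f).trans h)
  have hnorm (f : C₀(X, ℝ)) : ‖E f‖ = ‖f‖ := (hiso _ _).trans (by rw [hsub])
  have hadd (f g : C₀(X, ℝ)) : E (f + g) = E f + E g := by
    rw [hE ((PosCone.posPart f).add (PosCone.posPart g))
      ((PosCone.posPart (-f)).add (PosCone.posPart (-g))),
      PosCone.map_add_cone hsurj hiso, PosCone.map_add_cone hsurj hiso]
    · exact add_sub_add_comm _ _ _ _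
    · refine Eq.trans ?_ (add_sub_add_comm _ _ _ _).symm
      rw [hsub, hsub]
  let A : C₀(X, ℝ) →+ C₀(Y, ℝ) := AddMonoidHom.mk' E hadd
  have hA : Continuous A := (AddMonoidHomClass.isometry_of_norm A hnorm).continuous
  -- A continuous additive map is real-linear.
  let L : C₀(X, ℝ) →ₗᵢ[ℝ] C₀(Y, ℝ) := ⟨(A.toRealLinearMap hA).toLinearMap, hnorm⟩
  have hL (f : C₀(X, ℝ)) : L f = E f := rfl
  refine ⟨L, ⟨fun k => ?_, fun f => ?_⟩, ?_⟩
  · obtain ⟨u, hu⟩ := hsurj (PosCone.posPart k)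
    obtain ⟨v, hv⟩ := hsurj (PosCone.posPart (-k))
    refine ⟨u.1 - v.1, ?_⟩
    rw [hL, hE u v rfl, hu, hv, PosCone.posPart_sub_posPart_neg]
  · rw [hL, hE f 0 (sub_zero _).symm, PosCone.map_zero_cone hsurj hiso]
    exact sub_zero _
  · rintro L' ⟨-, hL'⟩
    ext1 f
    rw [hL, ← hsub f, map_sub, hL', hL', hsub]
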